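/- Let $\varphi$ and $\varphi_j$ be plurisubharmonic functions on a domain $D \subset \mathbb{C}^n$ with $\{\varphi_j\}$ locally uniformly bounded from above. If $\varphi_j \to \varphi$ locally in measure, then $\varphi_j \to \varphi$ in $L^p_{\mathrm{loc}}(D)$ for every $0 < p < \infty$. -/

import Mathlib

open MeasureTheory Filter
open scoped ENNReal

/-- Truncation of an extended-real value at level `-m`. -/
noncomputable def ERealTrunc (m : ℕ) (x : EReal) : ℝ := (max x (-(m : ℝ) : EReal)).toReal

/-- A function `u : ℂⁿ → [-∞, ∞)` is plurisubharmonic on `D` if it is upper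
semicontinuous, takes values in `[-∞, ∞)`, and all truncations satisfy the sub-mean
value inequality on circles contained (with their disks) in `D`. -/
def PlurisubharmonicOn {n : ℕ} (u : (Fin n → ℂ) → EReal)
    (D : Set ((Fin n → ℂ))) : Prop :=
  UpperSemicontinuousOn u D ∧ (∀ z ∈ D, u z ≠ ⊤) ∧
    ∀ z ∈ D, ∀ w : (Fin n → ℂ),
      (∀ t : ℂ, ‖t‖ ≤ 1 → z + t • w ∈ D) →
      ∀ m : ℕ,
        2 * Real.pi * ERealTrunc m (u z) ≤
          ∫ θ in (0 : ℝ)..(2 * Real.pi),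
            ERealTrunc m (u (z + Complex.exp (θ * Complex.I) • w))


lemma aux_inv_integrable :
    Integrable (Set.indicator (Metric.closedBall (0:ℂ) 3) (fun w : ℂ => ‖w‖⁻¹)) volume := by
  refine ⟨((measurable_norm.inv).indicator measurableSet_closedBall).aestronglyMeasurable, ?_⟩
  unfold HasFiniteIntegral
  rw [← Complex.lintegral_comp_polarCoord_symm]
  calc _ ≤ ∫⁻ p in polarCoord.target, Set.indicator (Set.Icc (0:ℝ) 3 ×ˢ Set.Icc (-Real.pi) Real.pi) (fun _ => (1:ℝ≥0∞)) p := by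
        refine setLIntegral_mono' polarCoord.open_target.measurableSet ?_
        rintro ⟨r, θ⟩ hp
        simp only [polarCoord_target, Set.mem_prod, Set.mem_Ioi, Set.mem_Ioo] at hp
        have hn : ‖Complex.polarCoord.symm (r, θ)‖ = r := by
          rw [Complex.norm_polarCoord_symm]; exact abs_of_pos hp.1
        by_cases h3 : r ≤ 3
        · have : (r, θ) ∈ Set.Icc (0:ℝ) 3 ×ˢ Set.Icc (-Real.pi) Real.pi :=
            ⟨⟨hp.1.le, h3⟩, ⟨hp.2.1.le, hp.2.2.le⟩⟩
          rw [Set.indicator_of_mem this, Set.indicator_of_mem (by simp [-Complex.polarCoord_symm_apply, hn, h3]), hn]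
          rw [Real.enorm_of_nonneg (by have := hp.1; positivity), smul_eq_mul, ← ENNReal.ofReal_mul hp.1.le,
            mul_inv_cancel₀ hp.1.ne']
          simp
        · rw [Set.indicator_of_notMem (by simp [-Complex.polarCoord_symm_apply, hn]; linarith)]
          simp
    _ ≤ ∫⁻ p, Set.indicator (Set.Icc (0:ℝ) 3 ×ˢ Set.Icc (-Real.pi) Real.pi) (fun _ => (1:ℝ≥0∞)) p :=
        setLIntegral_le_lintegral _ _
    _ = volume (Set.Icc (0:ℝ) 3 ×ˢ Set.Icc (-Real.pi) Real.pi) := by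
        rw [lintegral_indicator_const (by measurability), one_mul]
    _ < ∞ := (isCompact_Icc.prod isCompact_Icc).measure_lt_top

lemma aux_kernel : ∃ C : ℝ, 0 < C ∧ ∀ z : ℂ, ‖z‖ ≤ 2 → ∀ E ⊆ Metric.closedBall (0:ℂ) (1/2),
    MeasurableSet E →
    volume.real E ≤ C ∧
    IntegrableOn (fun ζ : ℂ => ‖z - ζ‖⁻¹) E ∧ ∫ ζ in E, ‖z - ζ‖⁻¹ ≤ C := by
  set F := Set.indicator (Metric.closedBall (0:ℂ) 3) (fun w : ℂ => ‖w‖⁻¹) with hF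
  have hFi : Integrable F volume := aux_inv_integrable
  have hF0 : ∀ w, 0 ≤ F w := fun w => Set.indicator_nonneg (fun _ _ => by positivity) _
  have hI0 : 0 ≤ ∫ w, F w := integral_nonneg hF0
  refine ⟨(∫ w, F w) + volume.real (Metric.closedBall (0:ℂ) (1/2)) + 1, by positivity, ?_⟩
  intro z hz E hE hEm
  have hi : Integrable (fun ζ => F (z - ζ)) volume := hFi.comp_sub_left z
  have heq : Set.EqOn (fun ζ => F (z - ζ)) (fun ζ : ℂ => ‖z - ζ‖⁻¹) E := by
    intro ζ hζ
    have : ‖ζ‖ ≤ 1/2 := by simpa using hE hζ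
    have h2 := norm_sub_le z ζ
    simp only [hF]
    rw [Set.indicator_of_mem]
    simp; linarith
  have hb : volume.real E ≤ volume.real (Metric.closedBall (0:ℂ) (1/2)) :=
    measureReal_mono hE (isCompact_closedBall _ _).measure_lt_top.ne
  refine ⟨by linarith, hi.integrableOn.congr_fun heq hEm, ?_⟩
  rw [← setIntegral_congr_fun hEm heq]
  calc _ ≤ ∫ ζ, F (z - ζ) := setIntegral_le_integral hi (ae_of_all _ fun _ => hF0 _)
    _ = ∫ ζ, F ζ := integral_sub_left_eq_self F volume z
    _ ≤ _ := by have : 0 ≤ volume.real (Metric.closedBall (0:ℂ) (1/2)) := by positivity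
                linarith

lemma aux_log_integrable {z : ℂ} (hz : ‖z‖ ≤ 2) {E : Set ℂ}
    (hE : E ⊆ Metric.closedBall (0:ℂ) (1/2)) (hEm : MeasurableSet E) :
    IntegrableOn (fun ζ : ℂ => Real.log ‖z - ζ‖) E := by
  obtain ⟨C, hC, h⟩ := aux_kernel
  obtain ⟨-, h1, -⟩ := h z hz E hE hEm
  have hfin : volume E ≠ ⊤ := ((measure_mono hE).trans_lt (isCompact_closedBall _ _).measure_lt_top).ne
  have h2 : IntegrableOn (fun ζ : ℂ => 3 + ‖z - ζ‖⁻¹) E := (integrableOn_const hfin).add h1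
  refine Integrable.mono' h2 (by
    have : Measurable (fun ζ : ℂ => ‖z - ζ‖) := by fun_prop
    exact (Real.measurable_log.comp this).aestronglyMeasurable) ?_
  filter_upwards [ae_restrict_mem hEm] with ζ hζ
  have h3 : ‖ζ‖ ≤ 1/2 := by simpa using hE hζ
  have h4 := norm_sub_le z ζ
  rcases eq_or_lt_of_le (norm_nonneg (z - ζ)) with h0 | h0
  · rw [← h0]; simp
  · rw [Real.norm_eq_abs, abs_le]
    have h5 := Real.log_le_sub_one_of_pos h0
    have h6 := Real.log_le_sub_one_of_pos (inv_pos.2 h0)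
    rw [Real.log_inv] at h6
    have := inv_pos.2 h0
    constructor <;> linarith

lemma aux_log_lip {a b : ℝ} (ha : 0 < a) (hb : 0 < b) :
    |Real.log a - Real.log b| ≤ |a - b| * (a⁻¹ + b⁻¹) := by
  have h1 := Real.log_le_sub_one_of_pos (div_pos ha hb)
  have h2 := Real.log_le_sub_one_of_pos (div_pos hb ha)
  rw [Real.log_div ha.ne' hb.ne'] at h1
  rw [Real.log_div hb.ne' ha.ne'] at h2
  have e1 : a / b - 1 = (a - b) * b⁻¹ := by field_simp
  have e2 : b / a - 1 = -(a - b) * a⁻¹ := by field_simp; ring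
  have ia := inv_pos.2 ha
  have ib := inv_pos.2 hb
  have n1 := le_abs_self (a - b)
  have n2 := neg_le_abs (a - b)
  have n0 := abs_nonneg (a - b)
  rw [abs_le]
  constructor <;> nlinarith [mul_nonneg n0 ia.le, mul_nonneg n0 ib.le, mul_le_mul_of_nonneg_right n1 ib.le, mul_le_mul_of_nonneg_right n2 ia.le]

lemma aux_ae_ne (z : ℂ) (E : Set ℂ) : ∀ᵐ ζ ∂(volume.restrict E), 0 < ‖z - ζ‖ := by
  have : ∀ᵐ ζ ∂(volume : Measure ℂ), ζ ≠ z := by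
    simp [ae_iff]
  filter_upwards [ae_restrict_of_ae this] with ζ h
  exact norm_pos_iff.2 (sub_ne_zero.2 h.symm)

lemma aux_G_cont {E : Set ℂ}
    (hE : E ⊆ Metric.closedBall (0:ℂ) (1/2)) (hEm : MeasurableSet E) :
    ContinuousOn (fun z : ℂ => ∫ ζ in E, Real.log ‖z - ζ‖) (Metric.closedBall 0 2) := by
  obtain ⟨C, hC, h⟩ := aux_kernel
  have : LipschitzOnWith (Real.toNNReal (2 * C)) (fun z : ℂ => ∫ ζ in E, Real.log ‖z - ζ‖) (Metric.closedBall 0 2) := by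
    refine LipschitzOnWith.of_dist_le_mul fun z hz w hw => ?_
    rw [Real.coe_toNNReal _ (by positivity), Real.dist_eq, dist_eq_norm]
    have hz : ‖z‖ ≤ 2 := by simpa using hz
    have hw : ‖w‖ ≤ 2 := by simpa using hw
    obtain ⟨-, z1, z2⟩ := h z hz E hE hEm
    obtain ⟨-, w1, w2⟩ := h w hw E hE hEm
    rw [← integral_sub (aux_log_integrable hz hE hEm) (aux_log_integrable hw hE hEm)]
    calc _ ≤ ∫ ζ in E, |Real.log ‖z - ζ‖ - Real.log ‖w - ζ‖| := abs_integral_le_integral_abs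
      _ ≤ ∫ ζ in E, ‖z - w‖ * (‖z - ζ‖⁻¹ + ‖w - ζ‖⁻¹) := by
        refine integral_mono_ae
          ((aux_log_integrable hz hE hEm).sub (aux_log_integrable hw hE hEm)).abs
          ((z1.add w1).const_mul _) ?_
        filter_upwards [aux_ae_ne z E, aux_ae_ne w E] with ζ h1 h2
        refine (aux_log_lip h1 h2).trans ?_
        have : |‖z - ζ‖ - ‖w - ζ‖| ≤ ‖z - w‖ := by
          simpa using abs_norm_sub_norm_le (z - ζ) (w - ζ)
        gcongr
      _ = ‖z - w‖ * ((∫ ζ in E, ‖z - ζ‖⁻¹) + ∫ ζ in E, ‖w - ζ‖⁻¹) := by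
        rw [integral_const_mul, integral_add z1 w1]
      _ ≤ _ := by nlinarith [norm_nonneg (z - w)]
  exact this.continuousOn

lemma aux_G_mean {E : Set ℂ} (hEc : IsCompact E) {z : ℂ} {r : ℝ} (hr : 0 < r)
    (hd : Disjoint (Metric.closedBall z r) E) :
    ∫ θ in (0:ℝ)..(2 * Real.pi), (∫ ζ in E, Real.log ‖circleMap z r θ - ζ‖) =
      2 * Real.pi * ∫ ζ in E, Real.log ‖z - ζ‖ := by
  have hpi := Real.pi_pos
  have hcont : ContinuousOn (Function.uncurry fun (θ : ℝ) (ζ : ℂ) => Real.log ‖circleMap z r θ - ζ‖)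
      (Set.Icc 0 (2 * Real.pi) ×ˢ E) := by
    refine ContinuousOn.log ?_ ?_
    · have : Continuous (fun θ => circleMap z r θ) := continuous_circleMap z r
      fun_prop
    · rintro ⟨θ, ζ⟩ ⟨-, h2⟩
      simp only [ne_eq, norm_eq_zero, sub_eq_zero]
      intro h
      exact Set.disjoint_left.1 hd (circleMap_mem_closedBall z hr.le θ) (h ▸ h2)
  have hint : Integrable (Function.uncurry fun (θ : ℝ) (ζ : ℂ) => Real.log ‖circleMap z r θ - ζ‖)
      ((volume.restrict (Set.Ioc 0 (2 * Real.pi))).prod (volume.restrict E)) := by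
    rw [Measure.prod_restrict]
    have := hcont.integrableOn_compact (μ := (volume : Measure (ℝ × ℂ))) (isCompact_Icc.prod hEc)
    exact this.mono_set (Set.prod_mono Set.Ioc_subset_Icc_self le_rfl)
  rw [intervalIntegral.integral_of_le (by positivity), integral_integral_swap hint,
    ← integral_const_mul]
  refine setIntegral_congr_fun hEc.measurableSet fun ζ hζ => ?_
  rw [← intervalIntegral.integral_of_le (by positivity)]
  have h1 := circleAverage_log_norm_sub_const_eq_log_radius_add_posLog (c := z) (a := ζ) hr.ne'
  have h2 : r < ‖z - ζ‖ := by
    by_contra hh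
    refine Set.disjoint_left.1 hd ?_ hζ
    rw [Metric.mem_closedBall, dist_eq_norm, norm_sub_rev]; linarith
  have h3 : 1 ≤ r⁻¹ * ‖z - ζ‖ := by
    rw [← div_eq_inv_mul, le_div_iff₀ hr]; linarith
  rw [Real.posLog_eq_log (by rwa [abs_of_nonneg (by positivity)]), Real.log_mul (by positivity) (by linarith), Real.log_inv] at h1
  rw [Real.circleAverage] at h1
  simp only [smul_eq_mul] at h1
  have : Real.log ‖z - ζ‖ = (2 * Real.pi)⁻¹ * ∫ θ in (0:ℝ)..(2 * Real.pi), Real.log ‖circleMap z r θ - ζ‖ := by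
    rw [h1]; ring
  rw [this]; field_simp

lemma aux_normSq_circle (z : ℂ) (r θ : ℝ) :
    ‖circleMap z r θ‖ ^ 2 = ‖z‖ ^ 2 + r ^ 2 + 2 * r * (z.re * Real.cos θ + z.im * Real.sin θ) := by
  rw [← Complex.normSq_eq_norm_sq, ← Complex.normSq_eq_norm_sq, circleMap, Complex.exp_mul_I]
  simp [Complex.normSq_apply, Complex.cos_ofReal_re, Complex.sin_ofReal_re]
  nlinarith [Real.sin_sq_add_cos_sq θ]

lemma aux_normSq_mean (z : ℂ) (r : ℝ) :
    ∫ θ in (0:ℝ)..(2 * Real.pi), ‖circleMap z r θ‖ ^ 2 = 2 * Real.pi * (‖z‖ ^ 2 + r ^ 2) := by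
  simp_rw [aux_normSq_circle]
  rw [intervalIntegral.integral_add (by simp) (by apply Continuous.intervalIntegrable; fun_prop),
    intervalIntegral.integral_const_mul, intervalIntegral.integral_add
    (by apply Continuous.intervalIntegrable; fun_prop) (by apply Continuous.intervalIntegrable; fun_prop)]
  simp
  ring

/-- The one-variable estimate for compact sublevel sets. -/
lemma aux_one_dim_compact : ∃ C : ℝ, 0 < C ∧ ∀ (v : ℂ → ℝ) (M A t : ℝ), 0 ≤ t → 0 < M → 0 < A →
    UpperSemicontinuousOn v (Metric.closedBall 0 2) →
    (∀ s ∈ Metric.closedBall (0:ℂ) 2, v s ≤ M) → -A ≤ v 0 →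
    (∀ s r, 0 < r → Metric.closedBall s r ⊆ Metric.closedBall (0:ℂ) 2 →
      IntervalIntegrable (fun θ => v (circleMap s r θ)) volume 0 (2 * Real.pi) ∧
      2 * Real.pi * v s ≤ ∫ θ in (0:ℝ)..(2 * Real.pi), v (circleMap s r θ)) →
    ∀ E ⊆ Metric.closedBall (0:ℂ) (1/2), IsCompact E → (∀ s ∈ E, v s ≤ -t) →
    volume.real E ≤ C * Real.exp (-(Real.log 2 / (A + M)) * t) := by
  obtain ⟨C, hC, hker⟩ := aux_kernel
  refine ⟨C * Real.exp (1/20), by positivity, ?_⟩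
  intro v M A t ht hM hA husc hvM hv0 hmean E hE hEc hEt
  have hEm := hEc.measurableSet
  set e := volume.real E with he
  rcases eq_or_lt_of_le (show 0 ≤ e from measureReal_nonneg) with h0 | hepos
  · rw [← h0]; positivity
  have heC : e ≤ C := (hker 0 (by simp) E hE hEm).1
  set L := Real.log (C / e) with hL
  have hL0 : 0 ≤ L := Real.log_nonneg (by rwa [one_le_div hepos])
  set G : ℂ → ℝ := fun z => ∫ ζ in E, Real.log ‖z - ζ‖ with hG
  have hfin : volume E ≠ ⊤ := hEc.measure_lt_top.ne
  have hconst : ∀ c : ℝ, ∫ ζ in E, c = e * c := fun c => by simp [he]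
  have hEn : ∀ ζ ∈ E, ‖ζ‖ ≤ 1/2 := fun ζ h => by simpa using hE h
  have G1 : ∀ z : ℂ, ‖z‖ ≤ 2 → -(e * L) ≤ G z := by
    intro z hz
    obtain ⟨-, k1, k2⟩ := hker z hz E hE hEm
    have ha : 0 < C / e := by positivity
    have hi : IntegrableOn (fun ζ : ℂ => ‖z - ζ‖⁻¹ * (e / C) + (L - 1)) E :=
      (k1.mul_const _).add (integrableOn_const hfin)
    have : ∫ ζ in E, (‖z - ζ‖⁻¹ * (e / C) + (L - 1)) ≥ ∫ ζ in E, -Real.log ‖z - ζ‖ := by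
      refine integral_mono_ae (aux_log_integrable hz hE hEm).neg hi ?_
      filter_upwards [aux_ae_ne z E] with ζ hζ
      have h6 := Real.log_le_sub_one_of_pos (show 0 < ‖z - ζ‖⁻¹ * (e / C) by positivity)
      rw [Real.log_mul (by positivity) (by positivity), Real.log_inv] at h6
      have : Real.log (e / C) = - L := by rw [hL, ← Real.log_inv, inv_div]
      linarith
    rw [integral_add (k1.mul_const _) (integrableOn_const hfin), hconst, integral_mul_const, integral_neg] at this
    have h7 : (∫ ζ in E, ‖z - ζ‖⁻¹) * (e / C) ≤ e := by
      calc _ ≤ C * (e / C) := by gcongr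
        _ = e := by field_simp
    have : -G z ≤ e * L := by simp only [hG]; linarith
    linarith
  have G3 : ∀ z : ℂ, ‖z‖ = 2 → e * Real.log (3/2) ≤ G z := by
    intro z hz
    rw [← hconst]
    refine setIntegral_mono_on (integrableOn_const hfin) (aux_log_integrable hz.le hE hEm) hEm ?_
    intro ζ hζ
    have := hEn ζ hζ
    have h2 := norm_sub_norm_le z ζ
    exact Real.log_le_log (by norm_num) (by linarith)
  have G0 : G 0 ≤ -(e * Real.log 2) := by
    have : -(e * Real.log 2) = ∫ ζ in E, -Real.log 2 := by rw [hconst]; ring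
    rw [this]
    refine integral_mono_ae (aux_log_integrable (by simp) hE hEm) (integrableOn_const hfin) ?_
    filter_upwards [aux_ae_ne 0 E, ae_restrict_mem hEm] with ζ h1 h2
    rw [← Real.log_inv]
    have := hEn ζ h2
    refine Real.log_le_log h1 ?_
    simp; linarith
  have Gc := aux_G_cont hE hEm
  set T := t + M with hT
  have hTpos : 0 < T := by positivity
  set c := T / (e * (L + 1/20)) with hc
  have hcpos : 0 < c := by positivity
  have hcT : c * (e * (L + 1/20)) = T := by rw [hc]; field_simp
  -- the comparison function
  set f : ℂ → ℝ := fun s => v s + (-c * (G s - e * (1/20) * ‖s‖ ^ 2)) with hf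
  have hfusc : UpperSemicontinuousOn f (Metric.closedBall 0 2) := by
    refine husc.add (ContinuousOn.upperSemicontinuousOn ?_)
    have : ContinuousOn G (Metric.closedBall 0 2) := Gc
    fun_prop
  obtain ⟨z0, hz0, hmax⟩ := hfusc.exists_isMaxOn ⟨0, by simp⟩ (isCompact_closedBall _ _)
  have hz0' : ‖z0‖ ≤ 2 := by simpa using hz0
  have hlog32 : (1:ℝ)/5 ≤ Real.log (3/2) := by
    have := Real.one_sub_inv_le_log_of_pos (show (0:ℝ) < 3/2 by norm_num)
    norm_num at this ⊢; linarith
  have hfz0 : f z0 ≤ M := by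
    by_cases hzE : z0 ∈ E
    · have h1 := G1 z0 hz0'
      have h2 := hEn _ hzE
      have h3 := hEt _ hzE
      have h4 : ‖z0‖ ^ 2 ≤ 1 := by nlinarith [norm_nonneg z0]
      have h5 : -(e * (L + 1/20)) ≤ G z0 - e * (1/20) * ‖z0‖ ^ 2 := by nlinarith
      have h6 := mul_le_mul_of_nonneg_left h5 hcpos.le
      simp only [hf]; linarith
    · rcases eq_or_lt_of_le hz0' with h2 | h2
      · have h1 := G3 z0 h2
        have h4 : 0 ≤ G z0 - e * (1/20) * ‖z0‖ ^ 2 := by rw [h2]; nlinarith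
        have h6 := mul_nonneg hcpos.le h4
        have := hvM _ hz0
        simp only [hf]; linarith
      · exfalso
        have hopen : IsOpen (Metric.ball (0:ℂ) 2 ∩ Eᶜ) := Metric.isOpen_ball.inter hEc.isClosed.isOpen_compl
        obtain ⟨r, hr, hrs⟩ := Metric.nhds_basis_closedBall.mem_iff.1 (hopen.mem_nhds ⟨by simpa using h2, hzE⟩)
        have hsub : Metric.closedBall z0 r ⊆ Metric.closedBall (0:ℂ) 2 :=
          (hrs.trans Set.inter_subset_left).trans Metric.ball_subset_closedBall
        obtain ⟨hint, hm⟩ := hmean z0 r hr hsub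
        have hGm := aux_G_mean hEc hr (Set.disjoint_left.2 fun x hx hxE => (hrs hx).2 hxE)
        have hmem : ∀ θ, circleMap z0 r θ ∈ Metric.closedBall (0:ℂ) 2 := fun θ =>
          hsub (circleMap_mem_closedBall z0 hr.le θ)
        have hGi : IntervalIntegrable (fun θ => G (circleMap z0 r θ)) volume 0 (2 * Real.pi) := by
          apply Continuous.intervalIntegrable
          exact Gc.comp_continuous (continuous_circleMap z0 r) hmem
        have hNi : IntervalIntegrable (fun θ => ‖circleMap z0 r θ‖ ^ 2) volume 0 (2 * Real.pi) := by
          apply Continuous.intervalIntegrable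
          have := continuous_circleMap z0 r
          fun_prop
        have hii : IntervalIntegrable (fun θ => (-c * (G (circleMap z0 r θ) - e * (1/20) * ‖circleMap z0 r θ‖ ^ 2))) volume 0 (2 * Real.pi) :=
          (hGi.sub (hNi.const_mul _)).const_mul _
        have hle : ∫ θ in (0:ℝ)..(2 * Real.pi), f (circleMap z0 r θ) ≤ ∫ θ in (0:ℝ)..(2 * Real.pi), f z0 := by
          refine intervalIntegral.integral_mono_on (by positivity) (hint.add hii) (by simp) ?_
          intro θ _
          exact hmax (hmem θ)
        simp only [hf] at hle
        rw [intervalIntegral.integral_add hint hii, intervalIntegral.integral_const_mul,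
          intervalIntegral.integral_sub hGi (hNi.const_mul _), intervalIntegral.integral_const_mul,
          aux_normSq_mean] at hle
        simp only [hG] at hle
        rw [hGm] at hle
        simp only [intervalIntegral.integral_const, sub_zero, smul_eq_mul] at hle
        have : 0 < c * e * (1/20) * (2 * Real.pi) * r ^ 2 := by positivity
        nlinarith
  have h00 : f 0 ≤ M := (hmax (by simp : (0:ℂ) ∈ Metric.closedBall 0 2)).trans hfz0
  have hcG : c * (e * Real.log 2) ≤ A + M := by
    have := mul_le_mul_of_nonneg_left G0 hcpos.le
    simp only [hf] at h00
    simp at h00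
    linarith
  have hfinal : T * Real.log 2 / (A + M) ≤ L + 1/20 := by
    rw [div_le_iff₀ (by positivity)]
    calc T * Real.log 2 = (c * (e * Real.log 2)) * (L + 1/20) := by rw [← hcT]; ring
      _ ≤ (A + M) * (L + 1/20) := by gcongr
      _ = _ := by ring
  have h8 : Real.log e = Real.log C - L := by
    rw [hL, Real.log_div (by positivity) (by positivity)]; ring
  have hl2 : 0 < Real.log 2 := Real.log_pos (by norm_num)
  have h9 : t * Real.log 2 / (A + M) ≤ T * Real.log 2 / (A + M) := by
    gcongr; linarith
  rw [← Real.exp_log hepos]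
  calc Real.exp (Real.log e) ≤ Real.exp (Real.log C + 1/20 + -(Real.log 2 / (A + M)) * t) := by
        apply Real.exp_le_exp.2
        have : -(Real.log 2 / (A + M)) * t = -(t * Real.log 2 / (A + M)) := by ring
        rw [this]; linarith
    _ = _ := by rw [Real.exp_add, Real.exp_add, Real.exp_log hC]

lemma aux_trunc_coe (m : ℕ) {x : EReal} (hx : x ≠ ⊤) :
    ((ERealTrunc m x : ℝ) : EReal) = max x ((-(m:ℝ) : ℝ) : EReal) := by
  unfold ERealTrunc
  rw [← EReal.coe_neg]
  refine EReal.coe_toReal ?_ ?_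
  · exact (max_lt (lt_top_iff_ne_top.2 hx) (EReal.coe_lt_top _)).ne
  · exact (lt_of_lt_of_le (EReal.bot_lt_coe _) (le_max_right _ _)).ne'

lemma aux_trunc_lt (m : ℕ) {x : EReal} (hx : x ≠ ⊤) (a : ℝ) :
    ERealTrunc m x < a ↔ x < (a : EReal) ∧ -(m:ℝ) < a := by
  rw [← EReal.coe_lt_coe_iff, aux_trunc_coe m hx, max_lt_iff, EReal.coe_lt_coe_iff]

lemma aux_trunc_le (m : ℕ) {x : EReal} (hx : x ≠ ⊤) (a : ℝ) :
    ERealTrunc m x ≤ a ↔ x ≤ (a : EReal) ∧ -(m:ℝ) ≤ a := by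
  rw [← EReal.coe_le_coe_iff, aux_trunc_coe m hx, max_le_iff, EReal.coe_le_coe_iff]

lemma aux_le_trunc (m : ℕ) {x : EReal} (hx : x ≠ ⊤) (a : ℝ) :
    a ≤ ERealTrunc m x ↔ (a : EReal) ≤ x ∨ a ≤ -(m:ℝ) := by
  rw [← EReal.coe_le_coe_iff, aux_trunc_coe m hx, le_max_iff, EReal.coe_le_coe_iff]

lemma aux_usc_isOpen {n : ℕ} {D : Set (Fin n → ℂ)} (hD : IsOpen D) {u : (Fin n → ℂ) → EReal}
    (hu : UpperSemicontinuousOn u D) (a : EReal) : IsOpen {y | y ∈ D ∧ u y < a} := by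
  rw [isOpen_iff_mem_nhds]
  rintro y ⟨hy, h⟩
  have := hu y hy a h
  rw [hD.nhdsWithin_eq hy] at this
  filter_upwards [this, hD.mem_nhds hy] with z h1 h2 using ⟨h2, h1⟩

/-- The one-variable estimate. -/
lemma aux_one_dim : ∃ C : ℝ, 0 < C ∧ ∀ (n : ℕ) (D : Set (Fin n → ℂ)) (u : (Fin n → ℂ) → EReal)
    (x w : Fin n → ℂ) (ρ M A t : ℝ), IsOpen D → PlurisubharmonicOn u D → 0 ≤ t → 0 < M → 0 < A →
    Metric.closedBall x (2 * ρ) ⊆ D → (∀ y ∈ Metric.closedBall x (2 * ρ), u y ≤ (M : EReal)) →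
    ((-A : ℝ) : EReal) ≤ u x → ‖w‖ ≤ ρ →
    volume {s : ℂ | s ∈ Metric.ball 0 (1/2) ∧ u (x + s • w) < ((-t : ℝ) : EReal)} ≤
      ENNReal.ofReal (C * Real.exp (-(Real.log 2 / (A + M)) * t)) := by
  obtain ⟨C, hC, hmain⟩ := aux_one_dim_compact
  refine ⟨C, hC, ?_⟩
  intro n D u x w ρ M A t hD hu ht hM hA hball huM huA hw
  obtain ⟨husc, htop, hmean⟩ := hu
  obtain ⟨m, hm⟩ := exists_nat_ge t
  have hρ : 0 ≤ ρ := (norm_nonneg w).trans hw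
  have hm0 : (0:ℝ) ≤ m := by positivity
  have hmem : ∀ s ∈ Metric.closedBall (0:ℂ) 2, x + s • w ∈ Metric.closedBall x (2 * ρ) := by
    intro s hs
    have hs : ‖s‖ ≤ 2 := by simpa using hs
    rw [Metric.mem_closedBall, dist_eq_norm, add_sub_cancel_left, norm_smul]
    gcongr
  have hmD : ∀ s ∈ Metric.closedBall (0:ℂ) 2, x + s • w ∈ D := fun s hs => hball (hmem s hs)
  set v : ℂ → ℝ := fun s => ERealTrunc m (u (x + s • w)) with hv
  have hcl : Continuous (fun s : ℂ => x + s • w) := by fun_prop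
  have hvev : ∀ s ∈ Metric.closedBall (0:ℂ) 2, ∀ a, v s < a →
      ∀ᶠ s' in nhds s, x + s' • w ∈ D ∧ v s' < a := by
    intro s hs a ha
    rw [hv, aux_trunc_lt m (htop _ (hmD s hs))] at ha
    have h1 := (aux_usc_isOpen hD husc (a : EReal)).mem_nhds
      (show x + s • w ∈ {y | y ∈ D ∧ u y < (a:EReal)} from ⟨hmD s hs, ha.1⟩)
    filter_upwards [hcl.continuousAt.preimage_mem_nhds h1] with s' hs'
    exact ⟨hs'.1, by rw [hv, aux_trunc_lt m (htop _ hs'.1)]; exact ⟨hs'.2, ha.2⟩⟩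
  have hvusc : UpperSemicontinuousOn v (Metric.closedBall 0 2) := by
    intro s hs a ha
    exact nhdsWithin_le_nhds ((hvev s hs a ha).mono fun _ h => h.2)
  have hvM : ∀ s ∈ Metric.closedBall (0:ℂ) 2, v s ≤ M := by
    intro s hs
    rw [hv, aux_trunc_le m (htop _ (hmD s hs))]
    exact ⟨huM _ (hmem s hs), by linarith⟩
  have hvm : ∀ s ∈ Metric.closedBall (0:ℂ) 2, -(m:ℝ) ≤ v s := by
    intro s hs
    rw [hv, aux_le_trunc m (htop _ (hmD s hs))]
    exact Or.inr le_rfl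
  have hv0 : -A ≤ v 0 := by
    rw [hv, aux_le_trunc m (htop _ (hmD 0 (by simp)))]
    left; simpa using huA
  have hvmean : ∀ s r, 0 < r → Metric.closedBall s r ⊆ Metric.closedBall (0:ℂ) 2 →
      IntervalIntegrable (fun θ => v (circleMap s r θ)) volume 0 (2 * Real.pi) ∧
      2 * Real.pi * v s ≤ ∫ θ in (0:ℝ)..(2 * Real.pi), v (circleMap s r θ) := by
    intro s r hr hsub
    have hc : ∀ θ, circleMap s r θ ∈ Metric.closedBall (0:ℂ) 2 := fun θ =>
      hsub (circleMap_mem_closedBall s hr.le θ)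
    constructor
    · have hus : UpperSemicontinuous (fun θ => v (circleMap s r θ)) := by
        intro θ a ha
        exact (continuous_circleMap s r).continuousAt.eventually
          ((hvev _ (hc θ) a ha).mono fun _ h => h.2)
      rw [intervalIntegrable_iff]
      refine Measure.integrableOn_of_bounded (M := max M m) (by rw [Real.volume_uIoc]; exact ENNReal.ofReal_ne_top) hus.measurable.aestronglyMeasurable ?_
      refine ae_of_all _ fun θ => ?_
      rw [Real.norm_eq_abs, abs_le]
      constructor
      · linarith [hvm _ (hc θ), le_max_right M (m:ℝ)]
      · exact (hvM _ (hc θ)).trans (le_max_left _ _)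
    · have := hmean (x + s • w) (hmD s (hsub (by simp [hr.le]))) ((r:ℂ) • w) (by
        intro τ hτ
        have h1 : x + s • w + τ • (r:ℂ) • w = x + (s + τ * r) • w := by
          rw [smul_smul, add_smul, add_assoc]
        rw [h1]
        refine hmD _ (hsub ?_)
        rw [Metric.mem_closedBall, dist_eq_norm, add_sub_cancel_left, norm_mul]
        simp only [Complex.norm_real, Real.norm_eq_abs, abs_of_pos hr]
        nlinarith) m
      refine this.trans_eq ?_
      refine intervalIntegral.integral_congr fun θ _ => ?_
      have h1 : x + s • w + Complex.exp (θ * Complex.I) • (r:ℂ) • w = x + circleMap s r θ • w := by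
        rw [smul_smul, circleMap, add_smul, add_assoc, mul_comm]
      simp only [hv, h1]
  set S := {s : ℂ | s ∈ Metric.ball 0 (1/2) ∧ u (x + s • w) < ((-t : ℝ) : EReal)} with hS
  have hb2 : ∀ s ∈ Metric.ball (0:ℂ) (1/2), s ∈ Metric.closedBall (0:ℂ) 2 := fun s hs =>
    Metric.ball_subset_closedBall (Metric.ball_subset_ball (by norm_num) hs)
  have hSo : IsOpen S := by
    have : S = Metric.ball 0 (1/2) ∩ (fun s : ℂ => x + s • w) ⁻¹' {y | y ∈ D ∧ u y < ((-t:ℝ):EReal)} := by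
      ext s
      constructor
      · rintro ⟨h1, h2⟩
        exact ⟨h1, hmD s (hb2 s h1), h2⟩
      · rintro ⟨h1, h2, h3⟩
        exact ⟨h1, h3⟩
    rw [this]
    exact Metric.isOpen_ball.inter ((aux_usc_isOpen hD husc _).preimage hcl)
  by_contra hcon
  push Not at hcon
  obtain ⟨K, hKS, hK, hlt⟩ := hSo.measurableSet.exists_lt_isCompact hcon
  have := hmain v M A t ht hM hA hvusc hvM hv0 hvmean K
    (fun s hs => Metric.ball_subset_closedBall (hKS hs).1) hK (by
      intro s hs
      rw [hv, aux_trunc_le m (htop _ (hmD s (hb2 s (hKS hs).1)))]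
      exact ⟨(hKS hs).2.le, by linarith⟩)
  refine absurd hlt (not_lt.2 ?_)
  rw [← ofReal_measureReal hK.measure_lt_top.ne]
  exact ENNReal.ofReal_le_ofReal this

lemma aux_scale {n : ℕ} (x : Fin n → ℂ) {s : ℂ} (hs : s ≠ 0) (hs1 : ‖s‖ ≤ 1) {E : Set (Fin n → ℂ)}
    (hE : MeasurableSet E) : volume E ≤ volume ((fun w => x + s • w) ⁻¹' E) := by
  have hsn : 0 < ‖s‖ := norm_pos_iff.2 hs
  have hcn : ‖s / ‖s‖‖ = 1 := by
    rw [norm_div]; simp [hsn.ne']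
  set a : Circle := ⟨s / ‖s‖, by simpa [Submonoid.unitSphere] using hcn⟩ with ha
  have hrot : MeasurePreserving (fun w : Fin n → ℂ => fun i => rotation a (w i)) volume volume :=
    volume_preserving_pi (fun i => (rotation a).measurePreserving)
  have h1 : (fun w : Fin n → ℂ => x + s • w) = (fun y => x + y) ∘ (fun y => ‖s‖ • y) ∘
      (fun w : Fin n → ℂ => fun i => rotation a (w i)) := by
    funext w
    ext i
    have h2 : rotation a (w i) = (s / ‖s‖) * w i := rotation_apply a _
    have h3 : (‖s‖ : ℂ) ≠ 0 := by exact_mod_cast hsn.ne'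
    simp only [Function.comp, Pi.add_apply, Pi.smul_apply, smul_eq_mul, Complex.real_smul, h2]
    field_simp
  have hE1 : MeasurableSet ((fun y => x + y) ⁻¹' E) := (measurable_const_add x) hE
  have hE2 : MeasurableSet ((fun y : Fin n → ℂ => ‖s‖ • y) ⁻¹' ((fun y => x + y) ⁻¹' E)) :=
    (measurable_const_smul ‖s‖) hE1
  rw [h1, Set.preimage_comp, Set.preimage_comp, hrot.measure_preimage hE2.nullMeasurableSet,
    Measure.addHaar_preimage_smul _ hsn.ne', measure_preimage_add]
  refine le_mul_of_one_le_left (by positivity) ?_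
  rw [ENNReal.one_le_ofReal, abs_of_pos (by positivity)]
  exact (one_le_inv₀ (by positivity)).2 (pow_le_one₀ hsn.le hs1)

/-- Sublevel set estimate in several variables. -/
lemma aux_multi (n : ℕ) {ρ : ℝ} (hρ : 0 < ρ) : ∃ C : ℝ, 0 < C ∧ ∀ (D : Set (Fin n → ℂ))
    (u : (Fin n → ℂ) → EReal)
    (x : Fin n → ℂ) (M A t : ℝ), IsOpen D → PlurisubharmonicOn u D → 0 ≤ t → 0 < M → 0 < A →
    Metric.closedBall x (2 * ρ) ⊆ D → (∀ y ∈ Metric.closedBall x (2 * ρ), u y ≤ (M : EReal)) →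
    ((-A : ℝ) : EReal) ≤ u x →
    volume {y | y ∈ Metric.ball x (ρ/4) ∧ u y < ((-t : ℝ) : EReal)} ≤
      ENNReal.ofReal (C * Real.exp (-(Real.log 2 / (A + M)) * t)) := by
  obtain ⟨C, hC, h1⟩ := aux_one_dim
  set Ann : Set ℂ := Metric.ball 0 (1/2) \ Metric.closedBall 0 (1/4) with hAnn
  have hAo : IsOpen Ann := Metric.isOpen_ball.sdiff Metric.isClosed_closedBall
  have hAne : Ann.Nonempty := ⟨(1/3 : ℝ), by
    simp only [hAnn, Set.mem_sdiff, Metric.mem_ball, Metric.mem_closedBall, dist_zero_right,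
      Complex.norm_real, Real.norm_eq_abs]
    norm_num [abs_of_pos]⟩
  have hApos : 0 < volume Ann := hAo.measure_pos _ hAne
  have hAfin : volume Ann ≠ ⊤ := ((measure_mono Set.sdiff_subset).trans_lt
    (measure_ball_lt_top (μ := (volume : Measure ℂ)) (x := 0) (r := 1/2))).ne
  set VB := volume (Metric.ball (0 : Fin n → ℂ) ρ) with hVB
  have hVBfin : VB ≠ ⊤ := measure_ball_lt_top.ne
  refine ⟨(VB.toReal / (volume Ann).toReal) * C + 1, by positivity, ?_⟩
  intro D u x M A t hD hu ht hM hA hball huM huA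
  set E := {y | y ∈ Metric.ball x (ρ/4) ∧ u y < ((-t : ℝ) : EReal)} with hE
  set e := C * Real.exp (-(Real.log 2 / (A + M)) * t) with he
  have hEo : IsOpen E := by
    have : E = Metric.ball x (ρ/4) ∩ {y | y ∈ D ∧ u y < ((-t : ℝ) : EReal)} := by
      ext y
      constructor
      · rintro ⟨h2, h3⟩
        exact ⟨h2, hball (Metric.ball_subset_closedBall (Metric.ball_subset_ball (by linarith) h2)), h3⟩
      · rintro ⟨h2, h3, h4⟩; exact ⟨h2, h4⟩
    rw [this]
    exact Metric.isOpen_ball.inter (aux_usc_isOpen hD hu.1 _)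
  have hcont : Continuous (fun p : (Fin n → ℂ) × ℂ => x + p.2 • p.1) := by fun_prop
  have hmeas : Measurable (Function.uncurry fun (w : Fin n → ℂ) (s : ℂ) =>
      E.indicator (fun _ => (1:ℝ≥0∞)) (x + s • w)) :=
    (measurable_const.indicator hEo.measurableSet).comp hcont.measurable
  have hup : ∫⁻ w in Metric.ball (0 : Fin n → ℂ) ρ, ∫⁻ s in Metric.ball (0:ℂ) (1/2),
      E.indicator (fun _ => (1:ℝ≥0∞)) (x + s • w) ≤ ENNReal.ofReal e * VB := by
    rw [hVB, ← setLIntegral_const]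
    refine setLIntegral_mono' measurableSet_ball fun w hw => ?_
    have hw : ‖w‖ ≤ ρ := by
      have : ‖w‖ < ρ := by simpa using hw
      exact this.le
    have hcs : Continuous (fun s : ℂ => x + s • w) := by fun_prop
    refine le_trans ?_ (h1 n D u x w ρ M A t hD hu ht hM hA hball huM huA hw)
    have h3 : (fun s : ℂ => E.indicator (fun _ => (1:ℝ≥0∞)) (x + s • w)) =
        ((fun s : ℂ => x + s • w) ⁻¹' E).indicator (fun _ => (1:ℝ≥0∞)) := by
      funext s; rfl
    rw [h3, lintegral_indicator_const (hEo.preimage hcs).measurableSet, one_mul,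
      Measure.restrict_apply (hEo.preimage hcs).measurableSet]
    refine measure_mono ?_
    rintro s ⟨hs1, hs2⟩
    exact ⟨hs2, hs1.2⟩
  have hlow : volume E * volume Ann ≤ ∫⁻ w in Metric.ball (0 : Fin n → ℂ) ρ, ∫⁻ s in Metric.ball (0:ℂ) (1/2),
      E.indicator (fun _ => (1:ℝ≥0∞)) (x + s • w) := by
    rw [lintegral_lintegral_swap hmeas.aemeasurable, ← setLIntegral_const]
    refine (setLIntegral_mono' hAo.measurableSet ?_).trans (lintegral_mono_set Set.sdiff_subset)
    intro s hs
    have hs1 : ‖s‖ < 1/2 := by simpa using hs.1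
    have hs2 : 1/4 < ‖s‖ := by simpa using hs.2
    have hcs : Continuous (fun w : Fin n → ℂ => x + s • w) := by fun_prop
    have h3 : (fun w : Fin n → ℂ => E.indicator (fun _ => (1:ℝ≥0∞)) (x + s • w)) =
        ((fun w : Fin n → ℂ => x + s • w) ⁻¹' E).indicator (fun _ => (1:ℝ≥0∞)) := by
      funext s; rfl
    rw [h3, lintegral_indicator_const (hEo.preimage hcs).measurableSet, one_mul,
      Measure.restrict_apply (hEo.preimage hcs).measurableSet]
    refine (aux_scale x (norm_pos_iff.1 (by linarith)) (by linarith) hEo.measurableSet).trans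
      (measure_mono ?_)
    intro w hw
    refine ⟨hw, ?_⟩
    have h4 : ‖s‖ * ‖w‖ < ρ / 4 := by
      have := hw.1
      rwa [Metric.mem_ball, dist_eq_norm, add_sub_cancel_left, norm_smul] at this
    rw [Metric.mem_ball, dist_zero_right]
    nlinarith [norm_nonneg w]
  have hfin := hlow.trans hup
  have h5 : volume E ≤ ENNReal.ofReal e * VB / volume Ann :=
    (ENNReal.le_div_iff_mul_le (Or.inl hApos.ne') (Or.inl hAfin)).2 hfin
  refine h5.trans ?_
  have hApos' : 0 < (volume Ann).toReal := ENNReal.toReal_pos hApos.ne' hAfin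
  have h6 : ENNReal.ofReal e * VB / volume Ann =
      ENNReal.ofReal (e * VB.toReal / (volume Ann).toReal) := by
    rw [ENNReal.ofReal_div_of_pos hApos', ENNReal.ofReal_mul (p := e) (q := VB.toReal) (by positivity),
      ENNReal.ofReal_toReal hVBfin, ENNReal.ofReal_toReal hAfin]
  rw [h6]
  refine ENNReal.ofReal_le_ofReal ?_
  have : 0 < Real.exp (-(Real.log 2 / (A + M)) * t) := Real.exp_pos _
  calc e * VB.toReal / (volume Ann).toReal = (VB.toReal / (volume Ann).toReal) * C * Real.exp (-(Real.log 2 / (A + M)) * t) := by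
        rw [he]; ring
    _ ≤ _ := by rw [add_mul]; linarith

lemma aux_pointwise {q : ℝ} (hq : 0 < q) {x : EReal} (hx : x ≠ ⊤) :
    (EReal.toENNReal (-x)) ^ q ≤
      ∑' k : ℕ, ENNReal.ofReal (((k:ℝ) + 1) ^ q) * (if x < ((-(k:ℝ) : ℝ) : EReal) then 1 else 0) := by
  induction x with
  | top => exact absurd rfl hx
  | bot =>
    have : ∑' k : ℕ, ENNReal.ofReal (((k:ℝ) + 1) ^ q) * (if (⊥ : EReal) < ((-(k:ℝ) : ℝ) : EReal) then 1 else 0) = ⊤ := by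
      rw [eq_top_iff, ← ENNReal.tsum_const_eq_top_of_ne_zero (α := ℕ) (one_ne_zero)]
      refine ENNReal.tsum_le_tsum fun k => ?_
      rw [if_pos (EReal.bot_lt_coe _), mul_one, ENNReal.one_le_ofReal]
      exact Real.one_le_rpow (by linarith [Nat.cast_nonneg (α := ℝ) k]) hq.le
    rw [this]; exact le_top
  | coe a =>
    rw [← EReal.coe_neg, EReal.toENNReal_of_ne_top (EReal.coe_ne_top _), EReal.toReal_coe]
    rcases le_or_gt 0 a with h | h
    · rw [ENNReal.ofReal_of_nonpos (by linarith), ENNReal.zero_rpow_of_pos hq]; positivity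
    · have hb : 0 < -a := by linarith
      have hc : 0 < ⌈-a⌉₊ := Nat.ceil_pos.2 hb
      refine le_trans ?_ (ENNReal.le_tsum (⌈-a⌉₊ - 1))
      have h2 : ((⌈-a⌉₊ - 1 : ℕ) : ℝ) + 1 = ⌈-a⌉₊ := by
        exact_mod_cast Nat.sub_add_cancel hc
      have h3 := Nat.ceil_lt_add_one hb.le
      rw [if_pos, mul_one, h2, ENNReal.ofReal_rpow_of_pos hb]
      · refine ENNReal.ofReal_le_ofReal ?_
        exact Real.rpow_le_rpow hb.le (Nat.le_ceil _) hq.le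
      · rw [EReal.coe_lt_coe_iff]; linarith

lemma aux_summable (q : ℝ) {c : ℝ} (hc : 0 < c) :
    Summable (fun k : ℕ => ((k:ℝ) + 1) ^ q * Real.exp (-c * k)) := by
  obtain ⟨N, hN⟩ := exists_nat_ge q
  have h1 := (summable_nat_add_iff 1).2 (Real.summable_pow_mul_exp_neg_nat_mul N hc)
  have h2 := h1.mul_right (Real.exp c)
  refine Summable.of_nonneg_of_le (fun k => by positivity) (fun k => ?_) h2
  have hk : (1:ℝ) ≤ (k:ℝ) + 1 := by linarith [Nat.cast_nonneg (α := ℝ) k]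
  have : Real.exp (-c * k) = Real.exp (-c * ((k:ℝ)+1)) * Real.exp c := by
    rw [← Real.exp_add]; congr 1; ring
  rw [this, mul_assoc]
  push_cast
  gcongr
  rw [← Real.rpow_natCast]
  exact Real.rpow_le_rpow_of_exponent_le hk hN

/-- Uniform moment bounds. -/
lemma aux_moment (n : ℕ) {ρ M A q : ℝ} (hρ : 0 < ρ) (hM : 0 < M) (hA : 0 < A) (hq : 0 < q) :
    ∃ C : ℝ≥0∞, C ≠ ⊤ ∧ ∀ (D : Set (Fin n → ℂ)) (u : (Fin n → ℂ) → EReal)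
    (x : Fin n → ℂ), IsOpen D → PlurisubharmonicOn u D →
    Metric.closedBall x (2 * ρ) ⊆ D → (∀ y ∈ Metric.closedBall x (2 * ρ), u y ≤ (M : EReal)) →
    ((-A : ℝ) : EReal) ≤ u x →
    ∫⁻ y in Metric.ball x (ρ/4), (EReal.toENNReal (-u y)) ^ q ≤ C := by
  obtain ⟨C, hC, h⟩ := aux_multi n hρ
  have hl2 : 0 < Real.log 2 := Real.log_pos (by norm_num)
  have hc : 0 < Real.log 2 / (A + M) := by positivity
  have hsum := (aux_summable q hc).mul_right C
  refine ⟨ENNReal.ofReal (∑' k : ℕ, ((k:ℝ) + 1) ^ q * Real.exp (-(Real.log 2 / (A + M)) * k) * C), ENNReal.ofReal_ne_top, ?_⟩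
  intro D u x hD hu hball huM huA
  have hsub : Metric.ball x (ρ/4) ⊆ D := fun y hy =>
    hball (Metric.ball_subset_closedBall (Metric.ball_subset_ball (by linarith) hy))
  set E : ℕ → Set (Fin n → ℂ) := fun k => {y | y ∈ D ∧ u y < ((-(k:ℝ) : ℝ) : EReal)} with hE
  have hEo : ∀ k, IsOpen (E k) := fun k => aux_usc_isOpen hD hu.1 _
  calc ∫⁻ y in Metric.ball x (ρ/4), (EReal.toENNReal (-u y)) ^ q
      ≤ ∫⁻ y in Metric.ball x (ρ/4), ∑' k : ℕ, (E k).indicator (fun _ => ENNReal.ofReal (((k:ℝ) + 1) ^ q)) y := by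
        refine setLIntegral_mono' measurableSet_ball fun y hy => ?_
        refine (aux_pointwise hq (hu.2.1 y (hsub hy))).trans (ENNReal.tsum_le_tsum fun k => ?_)
        split_ifs with h1
        · rw [Set.indicator_of_mem (show y ∈ E k from ⟨hsub hy, h1⟩), mul_one]
        · simp
    _ = ∑' k : ℕ, ∫⁻ y in Metric.ball x (ρ/4), (E k).indicator (fun _ => ENNReal.ofReal (((k:ℝ) + 1) ^ q)) y :=
        lintegral_tsum fun k => (measurable_const.indicator (hEo k).measurableSet).aemeasurable
    _ ≤ ∑' k : ℕ, ENNReal.ofReal (((k:ℝ) + 1) ^ q * Real.exp (-(Real.log 2 / (A + M)) * k) * C) := by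
        refine ENNReal.tsum_le_tsum fun k => ?_
        rw [lintegral_indicator_const (hEo k).measurableSet, Measure.restrict_apply (hEo k).measurableSet,
          mul_assoc, ENNReal.ofReal_mul (by positivity)]
        gcongr
        have := h D u x M A k hD hu (by positivity) hM hA hball huM huA
        rw [mul_comm C] at this
        refine (measure_mono ?_).trans this
        rintro y ⟨⟨h1, h2⟩, h3⟩
        exact ⟨h3, h2⟩
    _ = _ := by rw [ENNReal.ofReal_tsum_of_nonneg (fun k => by positivity) hsum]

lemma aux_le_of_toENNReal {x : EReal} {b : ℝ≥0∞} (hb : b ≠ ⊤) (h : EReal.toENNReal (-x) ≤ b) :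
    ((-b.toReal : ℝ) : EReal) ≤ x := by
  induction x with
  | top => exact le_top
  | bot => simp at h; exact absurd h hb
  | coe a =>
    rw [← EReal.coe_neg, EReal.toENNReal_of_ne_top (EReal.coe_ne_top _), EReal.toReal_coe] at h
    have := (ENNReal.ofReal_le_iff_le_toReal hb).1 h
    rw [EReal.coe_le_coe_iff]; linarith

lemma aux_propagate {n : ℕ} {D : Set (Fin n → ℂ)} (hD : IsOpen D) (hconn : IsConnected D)
    (u : ℕ → (Fin n → ℂ) → EReal) (hu : ∀ j, PlurisubharmonicOn (u j) D)
    (hbdd : ∀ K : Set ((Fin n → ℂ)), IsCompact K → K ⊆ D →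
      ∃ M : ℝ, ∀ j, ∀ z ∈ K, u j z ≤ (M : EReal))
    (hpt : ∃ z0 ∈ D, ∀ r > 0, ∃ A : ℝ, ∀ᶠ j in atTop, ∃ x ∈ Metric.ball z0 r, ((-A : ℝ) : EReal) ≤ u j x)
    {q : ℝ} (hq : 0 < q) (K : Set (Fin n → ℂ)) (hK : IsCompact K) (hKD : K ⊆ D) :
    ∃ C : ℝ≥0∞, C ≠ ⊤ ∧ ∀ᶠ j in atTop, ∫⁻ y in K, (EReal.toENNReal (-u j y)) ^ q ≤ C := by
  have hloc : ∀ a ∈ D, ∃ r > 0, (∃ A : ℝ, ∀ᶠ j in atTop, ∃ x ∈ Metric.ball a r, ((-A : ℝ) : EReal) ≤ u j x) →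
      ∃ C : ℝ≥0∞, C ≠ ⊤ ∧ ∀ᶠ j in atTop, ∫⁻ y in Metric.ball a r, (EReal.toENNReal (-u j y)) ^ q ≤ C := by
    intro a ha
    obtain ⟨R, hR, hRD⟩ := Metric.nhds_basis_closedBall.mem_iff.1 (hD.mem_nhds ha)
    obtain ⟨M, hM⟩ := hbdd _ (isCompact_closedBall a R) hRD
    refine ⟨R / 3 / 8, by positivity, ?_⟩
    rintro ⟨A, hA⟩
    obtain ⟨C, hC, hmom⟩ := aux_moment n (ρ := R / 3) (M := max M 1) (A := max A 1) (by positivity)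
      (by positivity) (by positivity) hq
    refine ⟨C, hC, ?_⟩
    filter_upwards [hA] with j ⟨x, hx, hxA⟩
    rw [Metric.mem_ball] at hx
    have hsub : Metric.closedBall x (2 * (R/3)) ⊆ Metric.closedBall a R :=
      Metric.closedBall_subset_closedBall' (by linarith)
    have := hmom D (u j) x hD (hu j) (hsub.trans hRD)
      (fun y hy => (hM j y (hsub hy)).trans (EReal.coe_le_coe_iff.2 (le_max_left _ _)))
      (le_trans (EReal.coe_le_coe_iff.2 (neg_le_neg (le_max_left _ _))) hxA)
    refine le_trans (lintegral_mono_set (Metric.ball_subset_ball' ?_)) this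
    rw [dist_comm] at hx
    linarith
  set S : Set (Fin n → ℂ) := {a | ∃ r > 0, ∃ C : ℝ≥0∞, C ≠ ⊤ ∧ ∀ᶠ j in atTop,
    ∫⁻ y in Metric.ball a r, (EReal.toENNReal (-u j y)) ^ q ≤ C} with hS
  have hSo : IsOpen S := by
    rw [Metric.isOpen_iff]
    rintro a ⟨r, hr, C, hC, hev⟩
    refine ⟨r, hr, fun b hb => ⟨r - dist b a, by simpa using hb, C, hC, ?_⟩⟩
    filter_upwards [hev] with j hj
    exact (lintegral_mono_set (Metric.ball_subset_ball' (by linarith))).trans hj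
  have hDS : D ⊆ S := by
    refine hconn.isPreconnected.subset_of_closure_inter_subset hSo ?_ ?_
    · obtain ⟨z0, hz0, h⟩ := hpt
      obtain ⟨r, hr, h2⟩ := hloc z0 hz0
      obtain ⟨C, hC⟩ := h2 (h r hr)
      exact ⟨z0, hz0, r, hr, C, hC⟩
    · rintro a ⟨hac, haD⟩
      obtain ⟨r, hr, h2⟩ := hloc a haD
      obtain ⟨b, hb, hbS⟩ := mem_closure_iff.1 hac _ Metric.isOpen_ball (Metric.mem_ball_self hr)
      obtain ⟨rb, hrb, C, hC, hev⟩ := hbS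
      set W := Metric.ball a r ∩ Metric.ball b rb with hW
      have hWpos : 0 < volume W := (Metric.isOpen_ball.inter Metric.isOpen_ball).measure_pos _
        ⟨b, hb, Metric.mem_ball_self hrb⟩
      have hWfin : volume W ≠ ⊤ := ((measure_mono Set.inter_subset_left).trans_lt measure_ball_lt_top).ne
      set c := C / volume W + 1 with hc
      have hcfin : c ≠ ⊤ := ENNReal.add_ne_top.2 ⟨ENNReal.div_ne_top hC hWpos.ne', ENNReal.one_ne_top⟩
      obtain ⟨C', hC'⟩ := h2 ⟨(c ^ (1/q)).toReal, by
        filter_upwards [hev] with j hj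
        by_contra hcon
        push Not at hcon
        have h3 : ∀ x ∈ W, c ≤ (EReal.toENNReal (-u j x)) ^ q := by
          intro x hx
          by_contra h4
          push Not at h4
          have h5 : EReal.toENNReal (-u j x) ≤ c ^ (1/q) := by
            rw [one_div, ENNReal.le_rpow_inv_iff hq]; exact h4.le
          exact absurd (aux_le_of_toENNReal (ENNReal.rpow_ne_top_of_nonneg (by positivity) hcfin) h5)
            (not_le.2 (hcon x hx.1))
        have h6 : c * volume W ≤ C := by
          rw [← setLIntegral_const]
          exact (setLIntegral_mono' (measurableSet_ball.inter measurableSet_ball) h3).trans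
            ((lintegral_mono_set Set.inter_subset_right).trans hj)
        rw [hc, add_mul, ENNReal.div_mul_cancel hWpos.ne' hWfin, one_mul] at h6
        exact absurd h6 (not_le.2 (ENNReal.lt_add_right hC hWpos.ne'))⟩
      exact ⟨r, hr, C', hC'⟩
  refine hK.induction_on (p := fun s => ∃ C : ℝ≥0∞, C ≠ ⊤ ∧ ∀ᶠ j in atTop, ∫⁻ y in s, (EReal.toENNReal (-u j y)) ^ q ≤ C)
    ?_ ?_ ?_ ?_
  · exact ⟨0, by simp, by simp⟩
  · rintro s t hst ⟨C, hC, h⟩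
    exact ⟨C, hC, h.mono fun j hj => (lintegral_mono_set hst).trans hj⟩
  · rintro s t ⟨C, hC, h⟩ ⟨C', hC', h'⟩
    refine ⟨C + C', ENNReal.add_ne_top.2 ⟨hC, hC'⟩, ?_⟩
    filter_upwards [h, h'] with j hj hj'
    exact (lintegral_union_le _ _ _).trans (add_le_add hj hj')
  · intro a ha
    obtain ⟨r, hr, C, hC, h⟩ := hDS (hKD ha)
    exact ⟨Metric.ball a r, nhdsWithin_le_nhds (Metric.ball_mem_nhds a hr), C, hC, h⟩

lemma aux_bdd {n : ℕ} {D : Set (Fin n → ℂ)} {u : (Fin n → ℂ) → EReal}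
    (hu : PlurisubharmonicOn u D) {K : Set (Fin n → ℂ)} (hK : IsCompact K) (hKD : K ⊆ D) :
    ∃ M : ℝ, ∀ z ∈ K, u z ≤ (M : EReal) := by
  rcases K.eq_empty_or_nonempty with rfl | hne
  · exact ⟨0, by simp⟩
  obtain ⟨a, ha, hmax⟩ := (hu.1.mono hKD).exists_isMaxOn hne hK
  exact ⟨(u a).toReal, fun z hz => (hmax hz).trans (EReal.le_coe_toReal (hu.2.1 a (hKD ha)))⟩

lemma aux_single {n : ℕ} {D : Set (Fin n → ℂ)} (hD : IsOpen D) (hconn : IsConnected D)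
    {u : (Fin n → ℂ) → EReal} (hu : PlurisubharmonicOn u D) (hne : ∃ z ∈ D, u z ≠ ⊥)
    {q : ℝ} (hq : 0 < q) {K : Set (Fin n → ℂ)} (hK : IsCompact K) (hKD : K ⊆ D) :
    ∫⁻ y in K, (EReal.toENNReal (-u y)) ^ q ≠ ⊤ := by
  obtain ⟨z0, hz0, hz⟩ := hne
  obtain ⟨C, hC, h⟩ := aux_propagate hD hconn (fun _ => u) (fun _ => hu)
    (fun K hK hKD => by
      obtain ⟨M, hM⟩ := aux_bdd hu hK hKD
      exact ⟨M, fun _ => hM⟩)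
    ⟨z0, hz0, fun r hr => ⟨-(u z0).toReal, Eventually.of_forall fun j =>
      ⟨z0, Metric.mem_ball_self hr, by
        rw [neg_neg, EReal.coe_toReal (hu.2.1 z0 hz0) hz]⟩⟩⟩ hq K hK hKD
  obtain ⟨j, hj⟩ := h.exists
  exact (hj.trans_lt (lt_top_iff_ne_top.2 hC)).ne

lemma aux_aemeas {n : ℕ} {D : Set (Fin n → ℂ)} (hD : IsOpen D)
    {u : (Fin n → ℂ) → EReal} (hu : PlurisubharmonicOn u D)
    {K : Set (Fin n → ℂ)} (hK : IsCompact K) (hKD : K ⊆ D) :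
    AEMeasurable u (volume.restrict K) := by
  classical
  refine ⟨D.piecewise u (fun _ => ⊤), ?_, ?_⟩
  · refine measurable_of_Iio fun a => ?_
    have : D.piecewise u (fun _ => ⊤) ⁻¹' Set.Iio a = {y | y ∈ D ∧ u y < a} := by
      ext y
      by_cases hy : y ∈ D <;> simp [hy]
    rw [this]
    exact (aux_usc_isOpen hD hu.1 a).measurableSet
  · filter_upwards [ae_restrict_mem hK.measurableSet] with y hy
    rw [Set.piecewise_eq_of_mem _ _ _ (hKD hy)]

lemma aux_ae_ne_bot {n : ℕ} {D : Set (Fin n → ℂ)} (hD : IsOpen D) (hconn : IsConnected D)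
    {u : (Fin n → ℂ) → EReal} (hu : PlurisubharmonicOn u D) (hne : ∃ z ∈ D, u z ≠ ⊥)
    {K : Set (Fin n → ℂ)} (hK : IsCompact K) (hKD : K ⊆ D) :
    ∀ᵐ y ∂(volume.restrict K), u y ≠ ⊥ := by
  have h1 := aux_single hD hconn hu hne one_pos hK hKD
  have hm : AEMeasurable (fun y => (EReal.toENNReal (-u y)) ^ (1:ℝ)) (volume.restrict K) :=
    ((aux_aemeas hD hu hK hKD).neg.ereal_toENNReal).pow_const _
  filter_upwards [ae_lt_top' hm h1] with y hy h
  simp [h] at hy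

lemma aux_points {n : ℕ}
    (D : Set ((Fin n → ℂ))) (hD : IsOpen D) (hconn : IsConnected D)
    (φ : (Fin n → ℂ) → EReal) (φseq : ℕ → (Fin n → ℂ) → EReal)
    (hφ : PlurisubharmonicOn φ D) (hφseq : ∀ j, PlurisubharmonicOn (φseq j) D)
    (hφne : ∃ z ∈ D, φ z ≠ ⊥) (hφseqne : ∀ j, ∃ z ∈ D, φseq j z ≠ ⊥)
    (hmeas : ∀ K : Set ((Fin n → ℂ)), IsCompact K → K ⊆ D →
      TendstoInMeasure (volume.restrict K)
        (fun j z => (φseq j z).toReal) atTop (fun z => (φ z).toReal)) :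
    ∃ z0 ∈ D, ∀ r > 0, ∃ A : ℝ, ∀ᶠ j in atTop, ∃ x ∈ Metric.ball z0 r, ((-A : ℝ) : EReal) ≤ φseq j x := by
  obtain ⟨z0, hz0, hz⟩ := hφne
  refine ⟨z0, hz0, fun r hr => ?_⟩
  obtain ⟨R, hR, hRD⟩ := Metric.nhds_basis_closedBall.mem_iff.1
    ((hD.inter Metric.isOpen_ball).mem_nhds ⟨hz0, Metric.mem_ball_self (x := z0) hr⟩)
  set B := Metric.closedBall z0 R with hB
  have hBc : IsCompact B := isCompact_closedBall _ _
  have hBD : B ⊆ D := hRD.trans Set.inter_subset_left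
  have hBpos : 0 < volume B := Metric.measure_closedBall_pos _ _ hR
  have hBfin : volume B ≠ ⊤ := hBc.measure_lt_top.ne
  set g : (Fin n → ℂ) → ℝ≥0∞ := fun y => (EReal.toENNReal (-φ y)) ^ (1:ℝ) with hg
  have hI := aux_single hD hconn hφ ⟨z0, hz0, hz⟩ one_pos hBc hBD
  have hgm : AEMeasurable g (volume.restrict B) :=
    ((aux_aemeas hD hφ hBc hBD).neg.ereal_toENNReal).pow_const _
  have hμ2 : volume B / 2 ≠ 0 := (ENNReal.half_pos hBpos.ne').ne'
  set c := (∫⁻ y in B, g y) / (volume B / 2) + 1 with hc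
  have hcfin : c ≠ ⊤ := ENNReal.add_ne_top.2 ⟨ENNReal.div_ne_top hI hμ2, ENNReal.one_ne_top⟩
  have hc0 : c ≠ 0 := by rw [hc]; simp
  have hmark : volume.restrict B {y | c ≤ g y} ≤ volume B / 2 := by
    refine (meas_ge_le_lintegral_div hgm hc0 hcfin).trans ?_
    refine ENNReal.div_le_of_le_mul ?_
    rw [hc, mul_add, ENNReal.mul_div_cancel hμ2 (ENNReal.div_ne_top hBfin (by simp))]
    exact le_self_add
  have hconv := hmeas B hBc hBD 1 one_pos
  refine ⟨c.toReal + 1, ?_⟩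
  filter_upwards [hconv.eventually_lt_const (ENNReal.half_pos hBpos.ne')] with j hj
  have hnb := aux_ae_ne_bot hD hconn (hφseq j) (hφseqne j) hBc hBD
  have hnb' := aux_ae_ne_bot hD hconn hφ ⟨z0, hz0, hz⟩ hBc hBD
  have hnull : volume.restrict B ({y | φseq j y ≠ ⊥ ∧ φ y ≠ ⊥ ∧ y ∈ B}ᶜ) = 0 :=
    (hnb.and (hnb'.and (ae_restrict_mem hBc.measurableSet)))
  by_contra hcon
  push Not at hcon
  have hcover : (Set.univ : Set (Fin n → ℂ)) ⊆ {y | φseq j y ≠ ⊥ ∧ φ y ≠ ⊥ ∧ y ∈ B}ᶜ ∪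
      ({y | c ≤ g y} ∪ {y | 1 ≤ edist (φseq j y).toReal (φ y).toReal}) := by
    intro y _
    by_contra hy
    simp only [Set.mem_union, not_or, Set.mem_compl_iff, not_not, Set.mem_ofPred_eq, not_le] at hy
    obtain ⟨⟨h1, h2, hyB⟩, h3, h4⟩ := hy
    have h5 : ((-c.toReal : ℝ) : EReal) ≤ φ y := aux_le_of_toENNReal hcfin (by simpa [hg] using h3.le)
    rw [← EReal.coe_toReal (hφ.2.1 y (hBD hyB)) h2, EReal.coe_le_coe_iff] at h5
    rw [edist_dist, ENNReal.ofReal_lt_one, Real.dist_eq, abs_lt] at h4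
    have h6 := hcon y (hRD hyB).2
    rw [← EReal.coe_toReal ((hφseq j).2.1 y (hBD hyB)) h1, EReal.coe_lt_coe_iff] at h6
    linarith [h4.1]
  have h7 := (measure_mono (μ := volume.restrict B) hcover).trans
    ((measure_union_le _ _).trans (add_le_add le_rfl (measure_union_le _ _)))
  rw [Measure.restrict_apply_univ, hnull, zero_add] at h7
  have h8 : volume B < volume B / 2 + volume B / 2 :=
    h7.trans_lt (ENNReal.add_lt_add_of_le_of_lt (hmark.trans_lt (lt_top_iff_ne_top.2 (ENNReal.div_ne_top hBfin (by simp)))).ne hmark hj)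
  rw [ENNReal.add_halves] at h8
  exact lt_irrefl _ h8

lemma aux_enorm_toReal {x : EReal} {M : ℝ} (hM : 0 ≤ M) (hx : x ≤ (M : EReal)) :
    ‖x.toReal‖ₑ ≤ EReal.toENNReal (-x) + ENNReal.ofReal M := by
  induction x with
  | top => simp at hx
  | bot => simp
  | coe a =>
    rw [EReal.coe_le_coe_iff] at hx
    rw [← EReal.coe_neg, EReal.toENNReal_of_ne_top (EReal.coe_ne_top _), EReal.toReal_coe,
      EReal.toReal_coe]
    rw [← ofReal_norm, Real.norm_eq_abs]
    rcases le_or_gt 0 a with h | h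
    · rw [abs_of_nonneg h]
      exact (ENNReal.ofReal_le_ofReal hx).trans le_add_self
    · rw [abs_of_neg h]; exact le_self_add

lemma aux_three (a b c : ℝ≥0∞) {q : ℝ} (hq : 0 < q) :
    (a + b + c) ^ q ≤ 3 ^ q * (a ^ q + b ^ q + c ^ q) := by
  have h1 : a + b + c ≤ 3 * max (max a b) c := by
    have ha : a ≤ max (max a b) c := (le_max_left _ _).trans (le_max_left _ _)
    have hb : b ≤ max (max a b) c := (le_max_right _ _).trans (le_max_left _ _)
    have hc : c ≤ max (max a b) c := le_max_right _ _
    calc a + b + c ≤ max (max a b) c + max (max a b) c + max (max a b) c := by gcongr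
      _ = _ := by ring
  refine (ENNReal.rpow_le_rpow h1 hq.le).trans ?_
  rw [ENNReal.mul_rpow_of_nonneg _ _ hq.le]
  gcongr
  rcases max_choice (max a b) c with h | h
  · rw [h]
    rcases max_choice a b with h | h
    · rw [h, add_assoc]; exact le_self_add
    · rw [h, add_assoc]; exact le_self_add.trans le_add_self
  · rw [h]; exact le_add_self

lemma aux_amgm (z ε l : ℝ≥0∞) {p : ℝ} (hp : 0 < p) (hl0 : l ≠ 0) (hl : l ≠ ⊤) :
    z ^ p ≤ ε ^ p + l * z ^ (2 * p) + l⁻¹ * (if ε ≤ z then 1 else 0) := by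
  split_ifs with h
  · rcases le_or_gt (z ^ p) l⁻¹ with h1 | h1
    · rw [mul_one]; exact h1.trans le_add_self
    · have h2 : 1 ≤ l * z ^ p := by
        rw [← ENNReal.mul_inv_cancel hl0 hl]
        gcongr
      rw [two_mul, ENNReal.rpow_add_of_nonneg _ _ hp.le hp.le, ← mul_assoc]
      calc z ^ p = 1 * z ^ p := (one_mul _).symm
        _ ≤ l * z ^ p * z ^ p := by gcongr
        _ ≤ _ := le_add_self.trans le_self_add
  · push Not at h
    rw [add_assoc]
    exact (ENNReal.rpow_le_rpow h.le hp.le).trans le_self_add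

/-- If psh functions `φ_j` on a domain `D` are locally uniformly bounded above and
converge locally in measure to a psh function `φ`, then they converge in
`L^p_loc` for every `0 < p < ∞`. -/
theorem psh_tendstoLocallyInMeasure_tendsto_Lp_loc {n : ℕ}
    (D : Set ((Fin n → ℂ))) (hD : IsOpen D) (hconn : IsConnected D)
    (φ : (Fin n → ℂ) → EReal) (φseq : ℕ → (Fin n → ℂ) → EReal)
    (hφ : PlurisubharmonicOn φ D) (hφseq : ∀ j, PlurisubharmonicOn (φseq j) D)
    (hφne : ∃ z ∈ D, φ z ≠ ⊥) (hφseqne : ∀ j, ∃ z ∈ D, φseq j z ≠ ⊥)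
    (hbdd : ∀ K : Set ((Fin n → ℂ)), IsCompact K → K ⊆ D →
      ∃ M : ℝ, ∀ j, ∀ z ∈ K, φseq j z ≤ (M : EReal))
    (hmeas : ∀ K : Set ((Fin n → ℂ)), IsCompact K → K ⊆ D →
      TendstoInMeasure (volume.restrict K)
        (fun j z => (φseq j z).toReal) atTop (fun z => (φ z).toReal)) :
    ∀ p : ℝ, 0 < p →
      ∀ K : Set ((Fin n → ℂ)), IsCompact K → K ⊆ D →
        Tendsto
          (fun j => eLpNorm (fun z => (φseq j z).toReal - (φ z).toReal)
            (ENNReal.ofReal p) (volume.restrict K)) atTop (nhds 0) := by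
  intro p hp K hK hKD
  have hpts := aux_points D hD hconn φ φseq hφ hφseq hφne hφseqne hmeas
  have h2p : 0 < 2 * p := by positivity
  obtain ⟨C1, hC1, hev⟩ := aux_propagate hD hconn φseq hφseq hbdd hpts h2p K hK hKD
  have hC2 := aux_single hD hconn hφ hφne h2p hK hKD
  set C2 := ∫⁻ y in K, (EReal.toENNReal (-φ y)) ^ (2 * p) with hC2def
  obtain ⟨M1, hM1⟩ := hbdd K hK hKD
  obtain ⟨M2, hM2⟩ := aux_bdd hφ hK hKD
  set M := max (max M1 M2) 0 with hMdef
  have hM0 : 0 ≤ M := le_max_right _ _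
  have hM1' : M1 ≤ M := (le_max_left _ _).trans (le_max_left _ _)
  have hM2' : M2 ≤ M := (le_max_right _ _).trans (le_max_left _ _)
  set V := volume K with hV
  have hVfin : V ≠ ⊤ := hK.measure_lt_top.ne
  set c := ENNReal.ofReal M + ENNReal.ofReal M with hc
  have hcfin : c ≠ ⊤ := by simp [hc]
  set Q := 3 ^ (2 * p) * (C1 + C2 + c ^ (2 * p) * V) with hQ
  have hQfin : Q ≠ ⊤ := by
    refine ENNReal.mul_ne_top (ENNReal.rpow_ne_top_of_nonneg h2p.le (by simp)) ?_
    refine ENNReal.add_ne_top.2 ⟨ENNReal.add_ne_top.2 ⟨hC1, hC2⟩, ?_⟩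
    exact ENNReal.mul_ne_top (ENNReal.rpow_ne_top_of_nonneg h2p.le hcfin) hVfin
  set f : ℕ → (Fin n → ℂ) → ℝ := fun j z => (φseq j z).toReal - (φ z).toReal with hf
  have hmφ := aux_aemeas hD hφ hK hKD
  have hmseq : ∀ j, AEMeasurable (φseq j) (volume.restrict K) := fun j => aux_aemeas hD (hφseq j) hK hKD
  have hfm : ∀ j, AEMeasurable (f j) (volume.restrict K) := fun j =>
    (hmseq j).ereal_toReal.sub hmφ.ereal_toReal
  have hmom : ∀ᶠ j in atTop, ∫⁻ z in K, ‖f j z‖ₑ ^ (2 * p) ≤ Q := by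
    filter_upwards [hev] with j hj
    have ha : AEMeasurable (fun y => (EReal.toENNReal (-φseq j y)) ^ (2 * p)) (volume.restrict K) :=
      ((hmseq j).neg.ereal_toENNReal).pow_const _
    have hb : AEMeasurable (fun y => (EReal.toENNReal (-φ y)) ^ (2 * p)) (volume.restrict K) :=
      (hmφ.neg.ereal_toENNReal).pow_const _
    have hab : AEMeasurable (fun y => (EReal.toENNReal (-φseq j y)) ^ (2 * p) +
        (EReal.toENNReal (-φ y)) ^ (2 * p)) (volume.restrict K) := ha.add hb
    calc ∫⁻ z in K, ‖f j z‖ₑ ^ (2 * p)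
        ≤ ∫⁻ z in K, 3 ^ (2 * p) * ((EReal.toENNReal (-φseq j z)) ^ (2 * p) +
            (EReal.toENNReal (-φ z)) ^ (2 * p) + c ^ (2 * p)) := by
          refine setLIntegral_mono' hK.measurableSet fun z hz => ?_
          refine le_trans (ENNReal.rpow_le_rpow ?_ h2p.le) (aux_three _ _ _ h2p)
          refine (enorm_sub_le).trans ?_
          have h1 := aux_enorm_toReal hM0 ((hM1 j z hz).trans (EReal.coe_le_coe_iff.2 hM1'))
          have h2 := aux_enorm_toReal hM0 ((hM2 z hz).trans (EReal.coe_le_coe_iff.2 hM2'))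
          refine (add_le_add h1 h2).trans_eq ?_
          rw [hc]; ring
      _ = 3 ^ (2 * p) * ((∫⁻ z in K, (EReal.toENNReal (-φseq j z)) ^ (2 * p)) + C2 + c ^ (2 * p) * V) := by
          rw [lintegral_const_mul' _ _ (ENNReal.rpow_ne_top_of_nonneg h2p.le (by simp)),
            lintegral_add_left' hab, lintegral_add_left' ha, setLIntegral_const]
      _ ≤ Q := by rw [hQ]; gcongr
  have hint : Tendsto (fun j => ∫⁻ z in K, ‖f j z‖ₑ ^ p) atTop (nhds 0) := by
    rw [ENNReal.tendsto_nhds_zero]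
    intro δ hδ
    rcases eq_or_ne δ ⊤ with rfl | hδt
    · simp
    set δ3 := δ / 3 with hδ3
    have hδ30 : δ3 ≠ 0 := (ENNReal.div_pos hδ.ne' (by simp)).ne'
    have hδ3t : δ3 ≠ ⊤ := ENNReal.div_ne_top hδt (by simp)
    set l := δ3 / (Q + 1) with hl
    have hl0 : l ≠ 0 := (ENNReal.div_pos hδ30 (by simp [hQfin])).ne'
    have hlt : l ≠ ⊤ := ENNReal.div_ne_top hδ3t (by simp)
    set e' := δ3 / (V + 1) with he'
    have he0 : e' ≠ 0 := (ENNReal.div_pos hδ30 (by simp [hVfin])).ne'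
    have het : e' ≠ ⊤ := ENNReal.div_ne_top hδ3t (by simp)
    set ε := e' ^ (1/p) with hε
    have hε0 : 0 < ε := ENNReal.rpow_pos (pos_iff_ne_zero.2 he0) het
    have hεp : ε ^ p = e' := by
      rw [hε, ← ENNReal.rpow_mul, one_div, inv_mul_cancel₀ hp.ne', ENNReal.rpow_one]
    have hconv := hmeas K hK hKD ε hε0
    have hpos : 0 < l * δ3 := pos_iff_ne_zero.2 (mul_ne_zero hl0 hδ30)
    filter_upwards [hmom, hconv.eventually_lt_const hpos] with j hj1 hj2
    set F := {z | ε ≤ ‖f j z‖ₑ} with hF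
    have hFm : NullMeasurableSet F (volume.restrict K) :=
      nullMeasurableSet_le aemeasurable_const (hfm j).enorm
    have hF2 : volume.restrict K F ≤ l * δ3 := by
      refine le_trans (le_of_eq ?_) hj2.le
      congr 1
    have hm1 : AEMeasurable (fun z => e' + l * ‖f j z‖ₑ ^ (2 * p)) (volume.restrict K) :=
      aemeasurable_const.add (((hfm j).enorm.pow_const _).const_mul _)
    calc ∫⁻ z in K, ‖f j z‖ₑ ^ p
        ≤ ∫⁻ z in K, (e' + l * ‖f j z‖ₑ ^ (2 * p) + l⁻¹ * F.indicator (fun _ => 1) z) := by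
          refine lintegral_mono fun z => ?_
          have := aux_amgm ‖f j z‖ₑ ε l hp hl0 hlt
          rw [hεp] at this
          refine this.trans_eq ?_
          have hzF : z ∈ F ↔ ε ≤ ‖f j z‖ₑ := Iff.rfl
          by_cases hz : z ∈ F
          · rw [Set.indicator_of_mem hz, if_pos (hzF.1 hz)]
          · rw [Set.indicator_of_notMem hz, if_neg (fun h => hz (hzF.2 h))]
      _ = e' * V + l * (∫⁻ z in K, ‖f j z‖ₑ ^ (2 * p)) + l⁻¹ * volume.restrict K F := by
          rw [lintegral_add_left' hm1,
            lintegral_add_left' aemeasurable_const, setLIntegral_const,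
            lintegral_const_mul' _ _ hlt, lintegral_const_mul' _ _ (ENNReal.inv_ne_top.2 hl0),
            lintegral_indicator_const₀ hFm, one_mul]
      _ ≤ δ3 + δ3 + δ3 := by
          have t1 : e' * V ≤ δ3 := by
            calc e' * V ≤ e' * (V + 1) := by gcongr; exact le_self_add
              _ = δ3 := ENNReal.div_mul_cancel (by simp) (by simp [hVfin])
          have t2 : l * (∫⁻ z in K, ‖f j z‖ₑ ^ (2 * p)) ≤ δ3 := by
            calc l * _ ≤ l * (Q + 1) := by gcongr; exact hj1.trans le_self_add
              _ = δ3 := ENNReal.div_mul_cancel (by simp) (by simp [hQfin])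
          have t3 : l⁻¹ * volume.restrict K F ≤ δ3 := by
            calc _ ≤ l⁻¹ * (l * δ3) := by gcongr
              _ = δ3 := by rw [← mul_assoc, ENNReal.inv_mul_cancel hl0 hlt, one_mul]
          gcongr
      _ = δ := ENNReal.add_thirds δ
  have hfinal : ∀ j, eLpNorm (f j) (ENNReal.ofReal p) (volume.restrict K) =
      (∫⁻ z in K, ‖f j z‖ₑ ^ p) ^ (1 / p) := by
    intro j
    rw [eLpNorm_eq_lintegral_rpow_enorm_toReal (by simp [hp]) (by simp), ENNReal.toReal_ofReal hp.le]
  have h0 : (0:ℝ≥0∞) ^ (1/p) = 0 := ENNReal.zero_rpow_of_pos (by positivity)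
  have := (ENNReal.continuous_rpow_const (y := 1/p)).tendsto 0 |>.comp hint
  rw [h0] at this
  exact this.congr fun j => (hfinal j).symm
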